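/- Let V be a nonempty finite set and f : 2^V → ℝ a normalized monotone submodular set function. If P and Q are both decomposers of the game (V, f), then their common refinement P ∧ Q = { C ∩ D : C ∈ P, D ∈ Q, C ∩ D ≠ ∅ } is also a decomposer of (V, f), i.e. f(V) = ∑_{E ∈ P∧Q} f(E). In particular, a decomposable game has a unique finest decomposer. -/

import Mathlib

/-!
Adding the members of a family `Q` to `X` one at a time, submodularity and monotonicity bound each
gain by `f D - f (X ⊓ D)`. If the values on `Q` add up to the value of their join, an element `X`
below that join therefore satisfies `∑ D ∈ Q, f (X ⊓ D) ≤ f X`. Summing over the parts `X` of `P`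
bounds the total value of the common refinement from above, since coincidences among the meets only
decrease this total, and subadditivity bounds it from below.
-/

open Finset
open scoped FinsetFamily

section

variable {α M : Type*}

/-- A submodular function on a lattice; on `Finset V` this is a submodular set function. -/
def IsSubmodular [Lattice α] [Add M] [LE M] (f : α → M) : Prop :=
  ∀ a b, f (a ⊓ b) + f (a ⊔ b) ≤ f a + f b

/-- A finite family with join `u` whose values under `f` add up to `f u`. A decomposer is such a
family whose members are moreover nonzero and pairwise disjoint. -/
structure IsAdditiveCover [SemilatticeSup α] [OrderBot α] [AddCommMonoid M]
    (f : α → M) (u : α) (P : Finset α) : Prop where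
  sup_eq : P.sup id = u
  map_eq_sum : f u = ∑ C ∈ P, f C

lemma sup_id_infs [DistribLattice α] [OrderBot α] [DecidableEq α] (P Q : Finset α) :
    (P ⊼ Q).sup id = P.sup id ⊓ Q.sup id := by
  rw [sup_inf_sup, ← image_inf_product, sup_image]
  rfl

lemma map_sup_id_le_sum [SemilatticeSup α] [OrderBot α] [AddCommMonoid M] [Preorder M]
    [AddLeftMono M] {f : α → M} (hbot : f ⊥ ≤ 0) (hadd : ∀ a b, f (a ⊔ b) ≤ f a + f b)
    (T : Finset α) : f (T.sup id) ≤ ∑ D ∈ T, f D := by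
  induction T using Finset.cons_induction with
  | empty => simpa only [sup_empty, sum_empty] using hbot
  | cons D T hD ih =>
    rw [sup_cons, sum_cons]
    exact (hadd D (T.sup id)).trans (by gcongr)

lemma sum_infs_le_sum_sum [SemilatticeInf α] [DecidableEq α] [AddCommMonoid M] [Preorder M]
    [AddLeftMono M] {f : α → M} (hf : ∀ a, 0 ≤ f a) (P Q : Finset α) :
    ∑ E ∈ P ⊼ Q, f E ≤ ∑ C ∈ P, ∑ D ∈ Q, f (C ⊓ D) := by
  rw [← image_inf_product, ← sum_product']
  exact sum_image_le_of_nonneg fun E _ => hf E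

namespace IsSubmodular

lemma map_sup_le_add [Lattice α] [AddCommMonoid M] [Preorder M] [AddLeftMono M] {f : α → M}
    (hsub : IsSubmodular f) (hf : ∀ a, 0 ≤ f a) (a b : α) : f (a ⊔ b) ≤ f a + f b :=
  (le_add_of_nonneg_left (hf (a ⊓ b))).trans (hsub a b)

variable [Lattice α] [OrderBot α] [AddCommMonoid M] [PartialOrder M] [IsOrderedCancelAddMonoid M]
  {f : α → M}

lemma sum_inf_add_map_sup_le (hsub : IsSubmodular f) (hmono : Monotone f) (X : α) (T : Finset α) :
    ∑ D ∈ T, f (X ⊓ D) + f (X ⊔ T.sup id) ≤ ∑ D ∈ T, f D + f X := by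
  induction T using Finset.cons_induction with
  | empty => simp only [sum_empty, sup_empty, sup_bot_eq, le_refl]
  | cons D T hD ih =>
    set S := X ⊔ T.sup id
    have hjoin : X ⊔ (cons D T hD).sup id = S ⊔ D := by
      rw [sup_cons, id, sup_left_comm, sup_comm]
    have hgain : f (X ⊓ D) + f (S ⊔ D) ≤ f S + f D :=
      (add_le_add_left (hmono (inf_le_inf_right D le_sup_left)) _).trans (hsub S D)
    rw [sum_cons, sum_cons, hjoin]
    refine le_of_add_le_add_right (a := f S) ?_
    calc f (X ⊓ D) + ∑ E ∈ T, f (X ⊓ E) + f (S ⊔ D) + f S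
        = (f (X ⊓ D) + f (S ⊔ D)) + (∑ E ∈ T, f (X ⊓ E) + f S) := by abel
      _ ≤ (f S + f D) + (∑ E ∈ T, f E + f X) := add_le_add hgain ih
      _ = f D + ∑ E ∈ T, f E + f X + f S := by abel

lemma sum_inf_le (hsub : IsSubmodular f) (hmono : Monotone f) {u X : α} {Q : Finset α}
    (hQ : IsAdditiveCover f u Q) (hX : X ≤ u) : ∑ D ∈ Q, f (X ⊓ D) ≤ f X := by
  have hgain := hsub.sum_inf_add_map_sup_le hmono X Q
  rw [hQ.sup_eq, sup_eq_right.mpr hX, ← hQ.map_eq_sum, add_comm (f u)] at hgain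
  exact le_of_add_le_add_right hgain

end IsSubmodular

theorem common_refinement_decomposer_general [DistribLattice α] [OrderBot α] [DecidableEq α]
    [AddCommMonoid M] [PartialOrder M] [IsOrderedCancelAddMonoid M] {f : α → M}
    (hnorm : f ⊥ = 0) (hmono : Monotone f) (hsub : IsSubmodular f) {u : α} {P Q : Finset α}
    (hP : IsAdditiveCover f u P) (hQ : IsAdditiveCover f u Q) :
    IsAdditiveCover f u ((P ⊼ Q).erase ⊥) := by
  have hf (a : α) : 0 ≤ f a := hnorm.ge.trans (hmono bot_le)
  have hsup : (P ⊼ Q).sup id = u := by rw [sup_id_infs, hP.sup_eq, hQ.sup_eq, inf_idem]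
  refine ⟨(sup_erase_bot _).trans hsup, ?_⟩
  rw [sum_erase _ hnorm]
  apply le_antisymm
  · rw [← hsup]
    exact map_sup_id_le_sum hnorm.le (hsub.map_sup_le_add hf) (P ⊼ Q)
  · calc ∑ E ∈ P ⊼ Q, f E
        ≤ ∑ C ∈ P, ∑ D ∈ Q, f (C ⊓ D) := sum_infs_le_sum_sum hf P Q
      _ ≤ ∑ C ∈ P, f C :=
          sum_le_sum fun C hC => hsub.sum_inf_le hmono hQ (hP.sup_eq ▸ le_sup (f := id) hC)
      _ = f u := hP.map_eq_sum.symm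

end

/-- If `P` and `Q` are decomposers of the normalized monotone submodular game
`(V, f)`, then their common refinement
`P ∧ Q = { C ∩ D : C ∈ P, D ∈ Q, C ∩ D ≠ ∅ }` is also a decomposer. -/
theorem common_refinement_decomposer
    {V : Type*} [Fintype V] [DecidableEq V] [Nonempty V]
    (f : Finset V → ℝ)
    (hnorm : f ∅ = 0)
    (hmono : ∀ X Y : Finset V, Y ⊆ X → f Y ≤ f X)
    (hsub : ∀ X Y : Finset V, f (X ∩ Y) + f (X ∪ Y) ≤ f X + f Y)
    (P Q : Finset (Finset V))
    (hPne : ∀ C ∈ P, C.Nonempty)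
    (hPdisj : ∀ C ∈ P, ∀ D ∈ P, C ≠ D → Disjoint C D)
    (hPcover : P.sup id = Finset.univ)
    (hPdec : f Finset.univ = ∑ C ∈ P, f C)
    (hQne : ∀ C ∈ Q, C.Nonempty)
    (hQdisj : ∀ C ∈ Q, ∀ D ∈ Q, C ≠ D → Disjoint C D)
    (hQcover : Q.sup id = Finset.univ)
    (hQdec : f Finset.univ = ∑ C ∈ Q, f C) :
    f Finset.univ
      = ∑ E ∈ (((P ×ˢ Q).image fun p => p.1 ∩ p.2).filter fun E => E.Nonempty),
          f E := by
  simp only [nonempty_iff_ne_empty, filter_ne']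
  exact (common_refinement_decomposer_general hnorm (fun Y X => hmono X Y) hsub
    ⟨hPcover, hPdec⟩ ⟨hQcover, hQdec⟩).map_eq_sum
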